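/- arXiv:0806.1917 — 2 statements merged into one kernel-verified Lean document; each statement's English description precedes it below -/
import Mathlib

section
/- Let M = (M_0, M_1, M_2, …) be an increasing sequence of positive real numbers with M_0 = 1 that is logarithmically convex, satisfies lim_{j→∞} (M_j)^{1/j} = ∞, and satisfies sup_{j≥1} (M_{j+1}/M_j)^{1/j} < ∞. Then the Denjoy-Carleman classes are closed under composition: if U ⊆ ℝ^N and V ⊆ ℝ^P are open sets, f ∈ C^ℝ_M(V), and g = (g_1, …, g_P) : U → V is a map with g_j ∈ C^ℝ_M(U) for 1 ≤ j ≤ P, then f ∘ g ∈ C^ℝ_M(U). -/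
/-- The `i`-th partial derivative of a function on Euclidean space. -/
noncomputable def pd {ι : Type} [Fintype ι] [DecidableEq ι] {W : Type} [NormedAddCommGroup W]
    [NormedSpace ℝ W] (i : ι) (f : EuclideanSpace ℝ ι → W) : EuclideanSpace ℝ ι → W :=
  fun x => fderiv ℝ f x (EuclideanSpace.single i 1)

/-- The multi-index derivative `D^α f`. -/
noncomputable def mderiv {ι : Type} [Fintype ι] [DecidableEq ι] {W : Type} [NormedAddCommGroup W]
    [NormedSpace ℝ W] (α : ι → ℕ) (f : EuclideanSpace ℝ ι → W) : EuclideanSpace ℝ ι → W :=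
  (Finset.univ : Finset ι).toList.foldr (fun i g => (pd i)^[α i] g) f

/-- Membership in the real Denjoy-Carleman class `C^ℝ_M(U)`: `f` is `C^∞` on `U` and on every
compact `K ⊆ U` there are `A, B > 0` with `|(1/α!) D^α f(x)| ≤ A B^{|α|} M_{|α|}`. -/
def CRM {ι : Type} [Fintype ι] [DecidableEq ι] (M : ℕ → ℝ)
    (U : Set (EuclideanSpace ℝ ι)) (f : EuclideanSpace ℝ ι → ℝ) : Prop :=
  ContDiffOn ℝ (⊤ : ℕ∞) f U ∧
  ∀ K : Set (EuclideanSpace ℝ ι), K ⊆ U → IsCompact K →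
    ∃ A B : ℝ, 0 < A ∧ 0 < B ∧ ∀ x ∈ K, ∀ α : ι → ℕ,
      (1 / (∏ i, ((α i).factorial : ℝ))) * |mderiv α f x| ≤
        A * B ^ (∑ i, α i) * M (∑ i, α i)


open Finset in
theorem multinom_bd {ι : Type} [Fintype ι] [DecidableEq ι] (α : ι → ℕ) :
    (((∑ i, α i).factorial : ℕ) : ℝ) ≤ (Fintype.card ι : ℝ) ^ (∑ i, α i) * ∏ i, ((α i).factorial : ℝ) := by
  have h := Finset.sum_pow_eq_sum_piAntidiag (R := ℕ) (Finset.univ : Finset ι) (fun _ => 1) (∑ i, α i)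
  simp only [Finset.sum_const, Finset.card_univ, smul_eq_mul, mul_one, one_pow, Finset.prod_const_one,
    Nat.cast_id] at h
  have h2 : Nat.multinomial Finset.univ α ≤ (Fintype.card ι) ^ (∑ i, α i) := by
    rw [h]
    exact Finset.single_le_sum (f := fun a => Nat.multinomial Finset.univ a) (fun _ _ => Nat.zero_le _)
      (by simp)
  have h3 := Nat.multinomial_spec (Finset.univ : Finset ι) α
  rw [← h3, mul_comm]
  push_cast
  gcongr
  exact_mod_cast h2

theorem fact_bd {ι : Type} [Fintype ι] [DecidableEq ι] (α : ι → ℕ) :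
    (∏ i, ((α i).factorial : ℝ)) ≤ (((∑ i, α i).factorial : ℕ) : ℝ) := by
  exact_mod_cast Nat.le_of_dvd (Nat.factorial_pos _) (Nat.prod_factorial_dvd_factorial_sum _ _)

theorem two_le_top : (2 : WithTop ℕ∞) ≤ ((⊤ : ℕ∞) : WithTop ℕ∞) := by
  have h : ((2 : ℕ∞) : WithTop ℕ∞) ≤ ((⊤ : ℕ∞) : WithTop ℕ∞) := WithTop.coe_le_coe.2 le_top
  exact h

section pds
variable {ι : Type} [Fintype ι] [DecidableEq ι]

noncomputable def pds (l : List ι) (f : EuclideanSpace ℝ ι → ℝ) : EuclideanSpace ℝ ι → ℝ :=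
  l.foldr (fun i g => pd i g) f

theorem pds_append (l l' : List ι) (f : EuclideanSpace ℝ ι → ℝ) :
    pds (l ++ l') f = pds l (pds l' f) := by simp [pds]

theorem pds_replicate (n : ℕ) (i : ι) (f : EuclideanSpace ℝ ι → ℝ) :
    pds (List.replicate n i) f = (pd i)^[n] f := by
  induction n with
  | zero => rfl
  | succ n ih => rw [List.replicate_succ, Function.iterate_succ_apply', ← ih]; rfl

theorem mderiv_eq (α : ι → ℕ) (f : EuclideanSpace ℝ ι → ℝ) :
    mderiv α f = pds ((Finset.univ : Finset ι).toList.flatMap (fun i => List.replicate (α i) i)) f := by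
  unfold mderiv
  induction (Finset.univ : Finset ι).toList with
  | nil => rfl
  | cons i l ih =>
    rw [List.foldr_cons, ih, List.flatMap_cons, pds_append, pds_replicate]

theorem alist_length (α : ι → ℕ) :
    ((Finset.univ : Finset ι).toList.flatMap (fun i => List.replicate (α i) i)).length = ∑ i, α i := by
  simp [List.length_flatMap]

theorem alist_count (α : ι → ℕ) (j : ι) :
    ((Finset.univ : Finset ι).toList.flatMap (fun i => List.replicate (α i) i)).count j = α j := by
  simp [List.count_flatMap, Function.comp_def, List.count_replicate]

variable {U : Set (EuclideanSpace ℝ ι)} (hU : IsOpen U)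
include hU

theorem pd_smooth {f : EuclideanSpace ℝ ι → ℝ} (hf : ContDiffOn ℝ (⊤ : ℕ∞) f U) (i : ι) :
    ContDiffOn ℝ (⊤ : ℕ∞) (pd i f) U := by
  have := hf.fderiv_of_isOpen hU (m := (⊤ : ℕ∞)) (by simp)
  exact this.clm_apply contDiffOn_const

theorem pds_smooth {f : EuclideanSpace ℝ ι → ℝ} (hf : ContDiffOn ℝ (⊤ : ℕ∞) f U) (l : List ι) :
    ContDiffOn ℝ (⊤ : ℕ∞) (pds l f) U := by
  induction l with
  | nil => exact hf
  | cons i l ih => exact pd_smooth hU ih i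

theorem pds_ofFn {f : EuclideanSpace ℝ ι → ℝ} (hf : ContDiffOn ℝ (⊤ : ℕ∞) f U) (n : ℕ) :
    ∀ (r : Fin n → ι), ∀ x ∈ U, pds (List.ofFn r) f x =
      iteratedFDeriv ℝ n f x (fun k => EuclideanSpace.single (r k) 1) := by
  induction n with
  | zero => intro r x _; simp [pds]
  | succ n ih =>
    intro r x hx
    have hd : DifferentiableAt ℝ (iteratedFDeriv ℝ n f) x := by
      have := hf.contDiffAt (hU.mem_nhds hx)
      exact this.differentiableAt_iteratedFDeriv (by exact_mod_cast ENat.natCast_lt_top n)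
    rw [List.ofFn_succ, hd.iteratedFDeriv_succ_apply_left']
    change fderiv ℝ (pds (List.ofFn fun i => r i.succ) f) x _ = _
    congr 1
    apply Filter.EventuallyEq.fderiv_eq
    filter_upwards [hU.mem_nhds hx] with y hy
    exact ih _ y hy

theorem pd_comm {f : EuclideanSpace ℝ ι → ℝ} (hf : ContDiffOn ℝ (⊤ : ℕ∞) f U) (i j : ι) :
    ∀ x ∈ U, pd i (pd j f) x = pd j (pd i f) x := by
  intro x hx
  have hc := hf.contDiffAt (hU.mem_nhds hx)
  have hs : IsSymmSndFDerivAt ℝ f x := hc.isSymmSndFDerivAt (by simpa using two_le_top)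
  have hd : DifferentiableAt ℝ (fderiv ℝ f) x :=
    (hc.fderiv_right (m := 1) (by rw [one_add_one_eq_two]; exact two_le_top)).differentiableAt (by simp)
  have key : ∀ a b : ι, pd a (pd b f) x =
      fderiv ℝ (fderiv ℝ f) x (EuclideanSpace.single a 1) (EuclideanSpace.single b 1) := by
    intro a b
    have := (hd.hasFDerivAt.clm_apply
      (hasFDerivAt_const (EuclideanSpace.single b (1:ℝ)) x)).fderiv
    change fderiv ℝ (fun y => fderiv ℝ f y (EuclideanSpace.single b 1)) x _ = _
    rw [this]
    simp
  rw [key, key]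
  exact hs _ _

theorem pds_perm {f : EuclideanSpace ℝ ι → ℝ} (hf : ContDiffOn ℝ (⊤ : ℕ∞) f U) {l l' : List ι}
    (h : l.Perm l') : ∀ x ∈ U, pds l f x = pds l' f x := by
  induction h with
  | nil => intro x _; rfl
  | cons i h ih =>
    intro x hx
    change fderiv ℝ (pds _ f) x _ = fderiv ℝ (pds _ f) x _
    congr 1
    apply Filter.EventuallyEq.fderiv_eq
    filter_upwards [hU.mem_nhds hx] with y hy
    exact ih y hy
  | swap i j l => exact pd_comm hU (pds_smooth hU hf l) j i
  | trans _ _ h1 h2 => intro x hx; rw [h1 x hx, h2 x hx]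

theorem abs_mderiv_le {f : EuclideanSpace ℝ ι → ℝ} (hf : ContDiffOn ℝ (⊤ : ℕ∞) f U) (α : ι → ℕ)
    {x : EuclideanSpace ℝ ι} (hx : x ∈ U) :
    |mderiv α f x| ≤ ‖iteratedFDeriv ℝ (∑ i, α i) f x‖ := by
  rw [← alist_length, mderiv_eq]
  generalize (Finset.univ : Finset ι).toList.flatMap (fun i => List.replicate (α i) i) = l
  have h := pds_ofFn hU hf l.length l.get x hx
  rw [List.ofFn_get] at h
  rw [h, ← Real.norm_eq_abs]
  refine (ContinuousMultilinearMap.le_opNorm _ _).trans ?_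
  simp

theorem norm_iterated_le {f : EuclideanSpace ℝ ι → ℝ} (hf : ContDiffOn ℝ (⊤ : ℕ∞) f U)
    {x : EuclideanSpace ℝ ι} (hx : x ∈ U) (n : ℕ) (C : ℝ) (hC : 0 ≤ C)
    (h : ∀ α : ι → ℕ, ∑ i, α i = n → |mderiv α f x| ≤ C) :
    ‖iteratedFDeriv ℝ n f x‖ ≤ (Fintype.card ι : ℝ) ^ n * C := by
  have hr : ∀ r : Fin n → ι,
      |iteratedFDeriv ℝ n f x (fun k => EuclideanSpace.single (r k) 1)| ≤ C := by
    intro r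
    rw [← pds_ofFn hU hf n r x hx]
    set α : ι → ℕ := fun i => (List.ofFn r).count i with hα
    have hp : (List.ofFn r).Perm
        ((Finset.univ : Finset ι).toList.flatMap (fun i => List.replicate (α i) i)) := by
      rw [List.perm_iff_count]
      intro a
      rw [alist_count]
    rw [pds_perm hU hf hp x hx, ← mderiv_eq]
    apply h
    rw [← alist_length, ← hp.length_eq, List.length_ofFn]
  apply ContinuousMultilinearMap.opNorm_le_bound (by positivity)
  intro v
  have hv : v = fun k => ∑ i, (v k i) • (EuclideanSpace.single i (1:ℝ) : EuclideanSpace ℝ ι) := by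
    funext k
    ext j
    simp [Finset.sum_apply, Pi.single_apply]
  conv_lhs => rw [hv]
  rw [ContinuousMultilinearMap.map_sum]
  refine (norm_sum_le _ _).trans ?_
  have : ∀ r : Fin n → ι, ‖iteratedFDeriv ℝ n f x
      (fun k => v k (r k) • (EuclideanSpace.single (r k) (1:ℝ) : EuclideanSpace ℝ ι))‖ ≤ C * ∏ k, ‖v k‖ := by
    intro r
    rw [ContinuousMultilinearMap.map_smul_univ, norm_smul, mul_comm, norm_prod]
    gcongr with k
    · exact hr r
    · exact PiLp.norm_apply_le (v k) (r k)
  refine (Finset.sum_le_sum fun r _ => this r).trans ?_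
  simp [mul_assoc]

end pds

section combi

theorem ratio_mono {M : ℕ → ℝ} (hlog : ∀ j : ℕ, M (j+1) / M j ≤ M (j+2) / M (j+1)) :
    Monotone (fun j => M (j+1) / M j) := monotone_nat_of_le_succ hlog

theorem step_le {M : ℕ → ℝ} (hpos : ∀ j, 0 < M j)
    (hlog : ∀ j : ℕ, M (j+1) / M j ≤ M (j+2) / M (j+1)) {a n : ℕ} (h : a ≤ n) :
    M (a+1) ≤ M a * (M (n+1) / M n) := by
  have := ratio_mono hlog h
  simp only at this
  rwa [div_le_iff₀' (hpos a)] at this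

noncomputable def wt (M : ℕ → ℝ) (lam : ℝ) {n : ℕ} (c : OrderedFinpartition n) : ℝ :=
  (c.length.factorial * lam ^ c.length * M c.length) *
    ∏ i, (((c.partSize i).factorial : ℝ) * M (c.partSize i))

theorem wt_none (M : ℕ → ℝ) (lam : ℝ) {n : ℕ} (c : OrderedFinpartition n) :
    wt M lam (c.extend none) = ((c.length + 1 : ℕ) * c.length.factorial * lam ^ (c.length + 1) * M (c.length+1)) *
     (M 1 * ∏ i, (((c.partSize i).factorial : ℝ) * M (c.partSize i))) := by
  have : ∏ i : Fin (c.length + 1), ((((Fin.cons 1 c.partSize : Fin (c.length + 1) → ℕ) i).factorial : ℝ) *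
      M ((Fin.cons 1 c.partSize : Fin (c.length + 1) → ℕ) i)) =
      M 1 * ∏ i, (((c.partSize i).factorial : ℝ) * M (c.partSize i)) := by
    rw [Fin.prod_univ_succ]; simp
  rw [← this]
  change ((c.length + 1).factorial * lam ^ (c.length + 1) * M (c.length + 1)) *
    ∏ i : Fin (c.length + 1), ((((Fin.cons 1 c.partSize : Fin (c.length + 1) → ℕ) i).factorial : ℝ) *
      M ((Fin.cons 1 c.partSize : Fin (c.length + 1) → ℕ) i)) = _
  simp [Nat.factorial_succ]

theorem wt_some (M : ℕ → ℝ) (lam : ℝ) {n : ℕ} (c : OrderedFinpartition n) (i : Fin c.length)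
    (hpos : ∀ j, 0 < M j) :
    wt M lam (c.extend (some i)) = wt M lam c * ((c.partSize i + 1 : ℕ) *
      (M (c.partSize i + 1) / M (c.partSize i))) := by
  have hne := (hpos (c.partSize i)).ne'
  change (c.length.factorial * lam ^ c.length * M c.length) *
    ∏ x : Fin c.length, (((Function.update c.partSize i (c.partSize i + 1) x).factorial : ℝ) *
       M (Function.update c.partSize i (c.partSize i + 1) x)) = _
  unfold wt
  rw [← Finset.mul_prod_erase _ _ (Finset.mem_univ i),
    ← Finset.mul_prod_erase _ (fun x => ((c.partSize x).factorial : ℝ) * M (c.partSize x))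
      (Finset.mem_univ i)]
  have : ∏ x ∈ Finset.univ.erase i, (((Function.update c.partSize i (c.partSize i + 1) x).factorial : ℝ) *
       M (Function.update c.partSize i (c.partSize i + 1) x)) =
      ∏ x ∈ Finset.univ.erase i, (((c.partSize x).factorial : ℝ) * M (c.partSize x)) := by
    apply Finset.prod_congr rfl
    intro x hx
    rw [Function.update_of_ne (Finset.ne_of_mem_erase hx)]
  rw [this, Function.update_self, Nat.factorial_succ]
  push_cast
  field_simp

theorem wt_sum {M : ℕ → ℝ} (hpos : ∀ j, 0 < M j) (hM0 : M 0 = 1)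
    (hlog : ∀ j : ℕ, M (j+1) / M j ≤ M (j+2) / M (j+1)) {lam : ℝ} (hlam : 0 ≤ lam) (n : ℕ) :
    ∑ c : OrderedFinpartition n, wt M lam c ≤ (lam * M 1 + 2) ^ n * n.factorial * M n := by
  have hwt : ∀ {n : ℕ} (c : OrderedFinpartition n), 0 ≤ wt M lam c := by
    intro n c
    unfold wt
    have h1 := (hpos c.length).le
    have := fun i => (hpos (c.partSize i)).le
    exact mul_nonneg (by positivity) (Finset.prod_nonneg fun i _ => mul_nonneg (by positivity) (this i))
  induction n with
  | zero =>
    rw [Fintype.sum_unique]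
    rw [OrderedFinpartition.default_eq]
    change ((Nat.factorial 0 : ℝ) * lam ^ 0 * M 0) * ∏ i : Fin 0, ((Nat.factorial 1 : ℝ) * M 1) ≤ _
    simp [hM0]
  | succ n ih =>
    rw [← (OrderedFinpartition.extendEquiv n).sum_comp, Fintype.sum_sigma]
    have hM1 := hpos 1
    have hMn := hpos n
    have hMn1 := hpos (n+1)
    have hc : ∀ c : OrderedFinpartition n, ∑ o : Option (Fin c.length),
        wt M lam ((OrderedFinpartition.extendEquiv n) ⟨c, o⟩) ≤
        wt M lam c * ((lam * M 1 + 2) * (n+1) * (M (n+1) / M n)) := by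
      intro c
      change ∑ o : Option (Fin c.length), wt M lam (c.extend o) ≤ _
      rw [Fintype.sum_option]
      have hlen : (c.length : ℝ) ≤ n := by exact_mod_cast c.length_le
      have h1 : wt M lam (c.extend none) ≤ wt M lam c * ((lam * M 1) * (n+1) * (M (n+1) / M n)) := by
        have hP : 0 ≤ ∏ i, (((c.partSize i).factorial : ℝ) * M (c.partSize i)) :=
          Finset.prod_nonneg fun i _ => mul_nonneg (by positivity) (hpos _).le
        rw [wt_none]
        calc _ ≤ ((n + 1 : ℝ) * c.length.factorial * lam ^ (c.length + 1) *
              (M c.length * (M (n+1) / M n))) *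
              (M 1 * ∏ i, (((c.partSize i).factorial : ℝ) * M (c.partSize i))) := by
              push_cast
              have := (hpos (c.length + 1)).le
              gcongr
              exact step_le hpos hlog c.length_le
          _ = _ := by unfold wt; ring
      have h2 : ∑ i, wt M lam (c.extend (some i)) ≤ wt M lam c * (2 * (n+1) * (M (n+1) / M n)) := by
        have hs : ∑ i : Fin c.length, c.partSize i = n := by
          have := c.sum_sigma_eq_sum (fun _ : Fin n => 1)
          simpa using this
        have hs' : ∑ i : Fin c.length, ((c.partSize i + 1 : ℕ) : ℝ) = n + c.length := by
          rw [← Nat.cast_sum, Finset.sum_add_distrib, hs]; simp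
        calc _ ≤ ∑ i : Fin c.length, wt M lam c * ((c.partSize i + 1 : ℕ) * (M (n+1) / M n)) := by
              apply Finset.sum_le_sum
              intro i _
              rw [wt_some M lam c i hpos]
              have := hwt c
              refine mul_le_mul_of_nonneg_left (mul_le_mul_of_nonneg_left ?_ (by positivity)) this
              exact ratio_mono hlog (c.partSize_le i)
          _ = wt M lam c * ((n + c.length) * (M (n+1) / M n)) := by
              rw [← Finset.mul_sum, ← Finset.sum_mul, hs']
          _ ≤ _ := by
              have := hwt c
              gcongr
              linarith
      calc _ ≤ _ := add_le_add h1 h2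
        _ = _ := by ring
    refine (Finset.sum_le_sum fun c _ => hc c).trans ?_
    rw [← Finset.sum_mul]
    calc _ ≤ ((lam * M 1 + 2) ^ n * n.factorial * M n) * ((lam * M 1 + 2) * (n+1) * (M (n+1) / M n)) := by
            gcongr
      _ = _ := by
          rw [Nat.factorial_succ]; push_cast; field_simp; ring

end combi

theorem CRM_norm_bound {ι : Type} [Fintype ι] [DecidableEq ι] {M : ℕ → ℝ} (hpos : ∀ j, 0 < M j)
    {U : Set (EuclideanSpace ℝ ι)} (hU : IsOpen U) {f : EuclideanSpace ℝ ι → ℝ} (hf : CRM M U f)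
    {K : Set (EuclideanSpace ℝ ι)} (hKU : K ⊆ U) (hK : IsCompact K) :
    ∃ A B : ℝ, 0 < A ∧ 0 < B ∧ ∀ x ∈ K, ∀ n : ℕ,
      ‖iteratedFDeriv ℝ n f x‖ ≤ A * B ^ n * (n.factorial * M n) := by
  obtain ⟨A, B, hA, hB, h⟩ := hf.2 K hKU hK
  refine ⟨A, (Fintype.card ι + 1) * B, hA, by positivity, fun x hx n => ?_⟩
  have hM := hpos n
  have h1 := norm_iterated_le hU hf.1 (hKU hx) n (n.factorial * (A * B ^ n * M n)) (by positivity) (by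
    intro α hα
    have h2 := h x hx α
    have h3 : 0 < ∏ i, ((α i).factorial : ℝ) :=
      Finset.prod_pos fun i _ => by exact_mod_cast Nat.factorial_pos _
    rw [one_div, inv_mul_le_iff₀ h3] at h2
    refine h2.trans ?_
    have h4 := fact_bd α
    rw [hα] at h4 ⊢
    gcongr)
  refine h1.trans ?_
  rw [mul_pow]
  calc _ ≤ ((Fintype.card ι : ℝ) + 1) ^ n * (n.factorial * (A * B ^ n * M n)) := by
        gcongr; linarith
    _ = _ := by ring

theorem G_norm_bound {ι κ : Type} [Fintype ι] [DecidableEq ι] [Fintype κ] [DecidableEq κ]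
    {M : ℕ → ℝ} (hpos : ∀ j, 0 < M j)
    {U : Set (EuclideanSpace ℝ ι)} (hU : IsOpen U) {G : EuclideanSpace ℝ ι → EuclideanSpace ℝ κ}
    (hf : ∀ j, CRM M U (fun x => G x j))
    {K : Set (EuclideanSpace ℝ ι)} (hKU : K ⊆ U) (hK : IsCompact K) :
    ∃ A B : ℝ, 0 < A ∧ 0 < B ∧ ∀ x ∈ K, ∀ n : ℕ,
      ‖iteratedFDeriv ℝ n G x‖ ≤ A * B ^ n * (n.factorial * M n) := by
  choose A B hA hB h using fun j => CRM_norm_bound hpos hU (hf j) hKU hK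
  have hsA : 0 ≤ ∑ j, A j := Finset.sum_nonneg fun j _ => (hA j).le
  have hsB : 0 ≤ ∑ j, B j := Finset.sum_nonneg fun j _ => (hB j).le
  refine ⟨1 + ∑ j, A j, 1 + ∑ j, B j, by positivity, by positivity, fun x hx n => ?_⟩
  have hM := hpos n
  have hsm : ContDiffAt ℝ (⊤ : ℕ∞) G x :=
    (contDiffOn_euclidean.2 fun j => (hf j).1).contDiffAt (hU.mem_nhds (hKU hx))
  have hcomp : ∀ j, ∀ v, iteratedFDeriv ℝ n G x v j = iteratedFDeriv ℝ n (fun y => G y j) x v := by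
    intro j v
    have := (EuclideanSpace.proj j : EuclideanSpace ℝ κ →L[ℝ] ℝ).iteratedFDeriv_comp_left hsm (i := n)
      (by exact_mod_cast le_top)
    have h2 := congrArg (fun m => m v) this
    exact h2.symm
  apply ContinuousMultilinearMap.opNorm_le_bound (by positivity)
  intro v
  have hnorm : ∀ y : EuclideanSpace ℝ κ, ‖y‖ ≤ ∑ j, ‖y j‖ := by
    intro y
    have hy : y = ∑ j, (y j) • (EuclideanSpace.single j (1:ℝ) : EuclideanSpace ℝ κ) := by
      ext j
      simp [Finset.sum_apply, Pi.single_apply]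
    conv_lhs => rw [hy]
    refine (norm_sum_le _ _).trans (le_of_eq ?_)
    simp [norm_smul]
  refine (hnorm _).trans ?_
  calc _ ≤ ∑ j, (A j * (1 + ∑ j, B j) ^ n * (n.factorial * M n)) * ∏ i, ‖v i‖ := by
        apply Finset.sum_le_sum
        intro j _
        rw [hcomp]
        refine (ContinuousMultilinearMap.le_opNorm _ _).trans ?_
        gcongr
        refine (h j x hx n).trans ?_
        have h1 := (hA j).le
        have h2 := (hB j).le
        have h3 : B j ≤ ∑ j, B j := Finset.single_le_sum (fun j _ => (hB j).le) (Finset.mem_univ j)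
        gcongr
        linarith
    _ = (∑ j, A j) * (1 + ∑ j, B j) ^ n * (n.factorial * M n) * ∏ i, ‖v i‖ := by
        simp only [Finset.sum_mul]
    _ ≤ _ := by
        gcongr
        linarith

theorem comp_norm_bound {E F : Type} [NormedAddCommGroup E] [NormedSpace ℝ E]
    [NormedAddCommGroup F] [NormedSpace ℝ F]
    {M : ℕ → ℝ} (hpos : ∀ j, 0 < M j) (hM0 : M 0 = 1)
    (hlog : ∀ j : ℕ, M (j+1) / M j ≤ M (j+2) / M (j+1))
    {f : F → ℝ} {G : E → F} {x : E} (hG : ContDiffAt ℝ (⊤ : ℕ∞) G x)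
    (hf : ContDiffAt ℝ (⊤ : ℕ∞) f (G x)) {A B A' B' : ℝ} (hA : 0 < A) (hB : 0 < B) (hA' : 0 < A')
    (hB' : 0 < B') (h1 : ∀ n, ‖iteratedFDeriv ℝ n f (G x)‖ ≤ A * B ^ n * (n.factorial * M n))
    (h2 : ∀ n, ‖iteratedFDeriv ℝ n G x‖ ≤ A' * B' ^ n * (n.factorial * M n)) (n : ℕ) :
    ‖iteratedFDeriv ℝ n (f ∘ G) x‖ ≤ A * (B' * (B * A' * M 1 + 2)) ^ n * (n.factorial * M n) := by
  rw [iteratedFDeriv_comp hf hG (by exact_mod_cast le_top)]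
  refine (norm_sum_le _ _).trans ?_
  have hc : ∀ c : OrderedFinpartition n,
      ‖(ftaylorSeries ℝ f (G x)).compAlongOrderedFinpartition (ftaylorSeries ℝ G x) c‖ ≤
        A * B' ^ n * wt M (B * A') c := by
    intro c
    refine (c.norm_compAlongOrderedFinpartition_le _ _).trans ?_
    have hs : ∑ i : Fin c.length, c.partSize i = n := by
      have := c.sum_sigma_eq_sum (fun _ : Fin n => 1)
      simpa using this
    have hMl := hpos c.length
    calc _ ≤ (A * B ^ c.length * (c.length.factorial * M c.length)) *
          ∏ i, (A' * B' ^ (c.partSize i) * ((c.partSize i).factorial * M (c.partSize i))) := by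
          gcongr
          · exact h1 _
          · exact h2 _
      _ = _ := by
          rw [Finset.prod_mul_distrib, Finset.prod_mul_distrib, Finset.prod_pow_eq_pow_sum, hs]
          unfold wt
          simp only [Finset.prod_const, Finset.card_univ, Fintype.card_fin]
          ring
  refine (Finset.sum_le_sum fun c _ => hc c).trans ?_
  rw [← Finset.mul_sum]
  calc _ ≤ A * B' ^ n * ((B * A' * M 1 + 2) ^ n * n.factorial * M n) := by
        gcongr
        exact wt_sum hpos hM0 hlog (by positivity) n
    _ = _ := by rw [mul_pow]; ring

/-- Denjoy-Carleman classes are closed under composition. -/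
theorem stmt5 {N P : ℕ} (M : ℕ → ℝ)
    (hpos : ∀ j, 0 < M j) (hmono : Monotone M) (hM0 : M 0 = 1)
    (hlog : ∀ j : ℕ, M (j+1) / M j ≤ M (j+2) / M (j+1))
    (hgrow : Filter.Tendsto (fun j : ℕ => M j ^ ((1 : ℝ) / j)) Filter.atTop Filter.atTop)
    (hder : ∃ C : ℝ, ∀ j : ℕ, 1 ≤ j → (M (j+1) / M j) ^ ((1 : ℝ) / j) ≤ C)
    (U : Set (EuclideanSpace ℝ (Fin N))) (hUopen : IsOpen U)
    (V : Set (EuclideanSpace ℝ (Fin P))) (hVopen : IsOpen V)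
    (f : EuclideanSpace ℝ (Fin P) → ℝ) (hf : CRM M V f)
    (g : Fin P → EuclideanSpace ℝ (Fin N) → ℝ) (hg : ∀ j, CRM M U (g j))
    (G : EuclideanSpace ℝ (Fin N) → EuclideanSpace ℝ (Fin P))
    (hG : ∀ x j, G x j = g j x)
    (hmaps : Set.MapsTo G U V) :
    CRM M U (fun x => f (G x)) := by
  have hGs : ContDiffOn ℝ (⊤ : ℕ∞) G U := by
    refine contDiffOn_euclidean.2 fun j => ?_
    simp only [hG]
    exact (hg j).1
  have hcs : ContDiffOn ℝ (⊤ : ℕ∞) (f ∘ G) U := hf.1.comp hGs hmaps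
  refine ⟨hcs, fun K hKU hK => ?_⟩
  obtain ⟨A, B, hA, hB, h1⟩ := CRM_norm_bound hpos hVopen hf
    (K := G '' K) (by rintro _ ⟨x, hx, rfl⟩; exact hmaps (hKU hx))
    (hK.image_of_continuousOn (hGs.continuousOn.mono hKU))
  obtain ⟨A', B', hA', hB', h2⟩ := G_norm_bound (G := G) hpos hUopen
    (by intro j; simp only [hG]; exact hg j) hKU hK
  have hM1 := hpos 1
  refine ⟨A, (N + 1) * (B' * (B * A' * M 1 + 2)), hA, by positivity, fun x hx α => ?_⟩
  have h3 := comp_norm_bound hpos hM0 hlog (hGs.contDiffAt (hUopen.mem_nhds (hKU hx)))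
    (hf.1.contDiffAt (hVopen.mem_nhds (hmaps (hKU hx)))) hA hB hA' hB' (h1 _ ⟨x, hx, rfl⟩) (h2 x hx)
    (∑ i, α i)
  have h4 := (abs_mderiv_le hUopen hcs α (hKU hx)).trans h3
  have h5 : 0 < ∏ i, ((α i).factorial : ℝ) :=
    Finset.prod_pos fun i _ => by exact_mod_cast Nat.factorial_pos _
  rw [one_div, inv_mul_le_iff₀ h5]
  refine h4.trans ?_
  have h6 := multinom_bd α
  rw [Fintype.card_fin] at h6
  generalize (∑ i, α i) = n at *
  have hMn := hpos n
  calc _ ≤ A * (B' * (B * A' * M 1 + 2)) ^ n * ((((N : ℝ) + 1) ^ n * ∏ i, ((α i).factorial : ℝ)) * M n) := by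
        gcongr
        refine h6.trans ?_
        gcongr
        linarith
    _ = _ := by rw [mul_pow ((N : ℝ) + 1)]; ring
end

section
/- Let M = (M_0, M_1, M_2, …) be an increasing sequence of positive real numbers with M_0 = 1 that is logarithmically convex, satisfies lim_{j→∞} (M_j)^{1/j} = ∞, and satisfies sup_{j≥1} (M_{j+1}/M_j)^{1/j} < ∞. Then C^ℝ_M(U) is closed under division by a coordinate: if U ⊆ ℝ^N is open, f ∈ C^ℝ_M(U), a_i ∈ ℝ, and f(x_1, …, x_{i−1}, a_i, x_{i+1}, …, x_N) = 0 for every point of U whose i-th coordinate equals a_i, then there exists h ∈ C^ℝ_M(U) such that f(x) = (x_i − a_i)·h(x) for all x ∈ U. -/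
open Set Filter Topology

section Helpers

lemma contDiff_param_nat {E : Type} [NormedAddCommGroup E] [NormedSpace ℝ E]
    [FiniteDimensional ℝ E] (n : ℕ) : ∀ {G : Type} [NormedAddCommGroup G] [NormedSpace ℝ G]
    (F : E × ℝ → G), ContDiff ℝ n F →
      ContDiff ℝ n (fun x => ∫ t in (0:ℝ)..1, F (x, t)) := by
  induction n with
  | zero =>
    intro G _ _ F hF
    have hF : Continuous F := hF.continuous
    have : Continuous (fun x => ∫ t in (0:ℝ)..1, F (x, t)) :=
      intervalIntegral.continuous_parametric_intervalIntegral_of_continuous' (by exact hF) 0 1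
    exact contDiff_zero.2 this
  | succ n ih =>
    intro G _ _ F hF
    have hF1 : ContDiff ℝ ((n : WithTop ℕ∞) + 1) F := by exact_mod_cast hF
    have hF2 : ContDiff ℝ n (fderiv ℝ F) := hF1.fderiv_right le_rfl
    set F' : E × ℝ → (E →L[ℝ] G) :=
      fun p => (fderiv ℝ F p).comp (ContinuousLinearMap.inl ℝ E ℝ) with hF'
    have hF'c : ContDiff ℝ n F' := hF2.clm_comp contDiff_const
    have hd : Differentiable ℝ F := hF1.differentiable (by simp)
    have key : ContDiff ℝ ((n : WithTop ℕ∞) + 1) (fun x => ∫ t in (0:ℝ)..1, F (x, t)) := by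
      rw [contDiff_succ_iff_hasFDerivAt]
      refine ⟨_, ih F' hF'c, fun x => ?_⟩
      have hcomp : IsCompact (Metric.closedBall x 1 ×ˢ Icc (0:ℝ) 1) :=
        (isCompact_closedBall x 1).prod isCompact_Icc
      obtain ⟨C, hC⟩ := hcomp.exists_bound_of_continuousOn hF'c.continuous.continuousOn
      have hmk : ∀ y : E, Continuous (fun t : ℝ => (y, t)) := fun y => by fun_prop
      refine intervalIntegral.hasFDerivAt_integral_of_dominated_of_fderiv_le
        (F := fun x t => F (x, t)) (F' := fun x t => F' (x, t)) (bound := fun _ => C)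
        (Metric.closedBall_mem_nhds x one_pos) ?_ ?_ ?_ ?_ ?_ ?_
      · exact Eventually.of_forall fun y =>
          (hd.continuous.comp (hmk y)).aestronglyMeasurable
      · exact (hd.continuous.comp (hmk x)).intervalIntegrable _ _
      · exact (hF'c.continuous.comp (hmk x)).aestronglyMeasurable
      · refine Eventually.of_forall fun t ht y hy => hC (y, t) ⟨hy, ?_⟩
        rw [uIoc_of_le zero_le_one] at ht
        exact ⟨ht.1.le, ht.2⟩
      · exact intervalIntegrable_const
      · refine Eventually.of_forall fun t ht y hy => ?_
        exact (hd (y, t)).hasFDerivAt.comp y (hasFDerivAt_prodMk_left y t)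
    exact_mod_cast key

lemma contDiff_param {E : Type} [NormedAddCommGroup E] [NormedSpace ℝ E]
    [FiniteDimensional ℝ E] {G : Type} [NormedAddCommGroup G] [NormedSpace ℝ G]
    (F : E × ℝ → G) (hF : ContDiff ℝ (⊤ : ℕ∞) F) :
      ContDiff ℝ (⊤ : ℕ∞) (fun x => ∫ t in (0:ℝ)..1, F (x, t)) := by
  rw [contDiff_infty] at hF ⊢
  exact fun n => contDiff_param_nat n F (hF n)

variable {N : ℕ}

/-- Contraction of the `i`-th coordinate towards `a`. -/
noncomputable def pt (i : Fin N) (a t : ℝ) (x : EuclideanSpace ℝ (Fin N)) :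
    EuclideanSpace ℝ (Fin N) :=
  x + ((t - 1) * (x i - a)) • EuclideanSpace.single i (1 : ℝ)

lemma pt_one (i : Fin N) (a : ℝ) (x) : pt i a 1 x = x := by simp [pt]

lemma pt_eq (i : Fin N) (a t : ℝ) (x : EuclideanSpace ℝ (Fin N)) (h : x i = a) :
    pt i a t x = x := by simp [pt, h]

lemma pt_apply (i : Fin N) (a t : ℝ) (x : EuclideanSpace ℝ (Fin N)) :
    pt i a t x i - a = t * (x i - a) := by simp [pt]; ring

lemma pt_dist (i : Fin N) (a t : ℝ) (ht : t ∈ Icc (0:ℝ) 1) (x y : EuclideanSpace ℝ (Fin N))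
    (h : x i = a) : dist (pt i a t y) x ≤ dist y x := by
  rw [EuclideanSpace.dist_eq, EuclideanSpace.dist_eq]
  apply Real.sqrt_le_sqrt
  apply Finset.sum_le_sum
  intro j _
  apply pow_le_pow_left₀ dist_nonneg
  rw [Real.dist_eq, Real.dist_eq]
  by_cases hj : j = i
  · subst hj
    rw [h, pt_apply, abs_mul, abs_of_nonneg ht.1]
    exact mul_le_of_le_one_left (abs_nonneg _) ht.2
  · simp [pt, hj]

lemma pt_hasDerivAt (i : Fin N) (a t : ℝ) (x : EuclideanSpace ℝ (Fin N)) :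
    HasDerivAt (fun t => pt i a t x) ((x i - a) • EuclideanSpace.single i (1 : ℝ)) t := by
  unfold pt
  have h1 : HasDerivAt (fun t : ℝ => (t - 1) * (x i - a)) (1 * (x i - a)) t :=
    ((hasDerivAt_id t).sub_const 1).mul_const _
  simpa using (h1.smul_const (EuclideanSpace.single i (1 : ℝ))).const_add x

lemma comp_pt_hasDerivAt (i : Fin N) (a t : ℝ) (x : EuclideanSpace ℝ (Fin N))
    (g : EuclideanSpace ℝ (Fin N) → ℝ) (hg : DifferentiableAt ℝ g (pt i a t x)) :
    HasDerivAt (fun t => g (pt i a t x)) ((x i - a) * pd i g (pt i a t x)) t := by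
  have := hg.hasFDerivAt.comp_hasDerivAt t (pt_hasDerivAt i a t x)
  refine HasDerivAt.congr_deriv (f := fun t => g (pt i a t x)) this ?_
  simp [pd]

lemma coord_contDiff (i : Fin N) (a : ℝ) :
    ContDiff ℝ (⊤ : ℕ∞) (fun x : EuclideanSpace ℝ (Fin N) => x i - a) :=
  (contDiff_euclidean.1 contDiff_id i).sub contDiff_const

lemma pd_contDiffOn {U : Set (EuclideanSpace ℝ (Fin N))} (hU : IsOpen U) (j : Fin N)
    {g : EuclideanSpace ℝ (Fin N) → ℝ} (hg : ContDiffOn ℝ (⊤ : ℕ∞) g U) :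
    ContDiffOn ℝ (⊤ : ℕ∞) (pd j g) U :=
  (hg.fderiv_of_isOpen hU (by simp)).clm_apply contDiffOn_const

lemma pd_eqOn {U : Set (EuclideanSpace ℝ (Fin N))} (hU : IsOpen U) (j : Fin N)
    {g g' : EuclideanSpace ℝ (Fin N) → ℝ} (h : EqOn g g' U) : EqOn (pd j g) (pd j g') U := by
  intro x hx
  have : g =ᶠ[𝓝 x] g' := h.eventuallyEq_of_mem (hU.mem_nhds hx)
  simp only [pd, this.fderiv_eq]

lemma pd_iter_contDiffOn {U : Set (EuclideanSpace ℝ (Fin N))} (hU : IsOpen U) (j : Fin N)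
    {g : EuclideanSpace ℝ (Fin N) → ℝ} (hg : ContDiffOn ℝ (⊤ : ℕ∞) g U) (k : ℕ) :
    ContDiffOn ℝ (⊤ : ℕ∞) ((pd j)^[k] g) U := by
  induction k with
  | zero => exact hg
  | succ k ih => rw [Function.iterate_succ_apply']; exact pd_contDiffOn hU j ih

lemma pd_iter_eqOn {U : Set (EuclideanSpace ℝ (Fin N))} (hU : IsOpen U) (j : Fin N)
    {g g' : EuclideanSpace ℝ (Fin N) → ℝ} (h : EqOn g g' U) (k : ℕ) :
    EqOn ((pd j)^[k] g) ((pd j)^[k] g') U := by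
  induction k with
  | zero => exact h
  | succ k ih => simp only [Function.iterate_succ_apply']; exact pd_eqOn hU j ih

lemma diffAt_of {U : Set (EuclideanSpace ℝ (Fin N))} (hU : IsOpen U)
    {g : EuclideanSpace ℝ (Fin N) → ℝ} (hg : ContDiffOn ℝ (⊤ : ℕ∞) g U)
    {x} (hx : x ∈ U) : DifferentiableAt ℝ g x :=
  (hg.contDiffAt (hU.mem_nhds hx)).differentiableAt (by simp)

lemma pd_pd_apply {U : Set (EuclideanSpace ℝ (Fin N))} (hU : IsOpen U) (i j : Fin N)
    {g : EuclideanSpace ℝ (Fin N) → ℝ} (hg : ContDiffOn ℝ (⊤ : ℕ∞) g U) {x} (hx : x ∈ U) :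
    pd i (pd j g) x =
      fderiv ℝ (fderiv ℝ g) x (EuclideanSpace.single i 1) (EuclideanSpace.single j 1) := by
  have h1 : ContDiffOn ℝ (⊤ : ℕ∞) (fderiv ℝ g) U := hg.fderiv_of_isOpen hU (by simp)
  have h2 : DifferentiableAt ℝ (fderiv ℝ g) x :=
    (h1.contDiffAt (hU.mem_nhds hx)).differentiableAt (by simp)
  have h3 := h2.hasFDerivAt.clm_apply
    (hasFDerivAt_const (EuclideanSpace.single j (1:ℝ) : EuclideanSpace ℝ (Fin N)) x)
  have h4 : fderiv ℝ (pd j g) x = _ := h3.fderiv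
  rw [show pd i (pd j g) x = fderiv ℝ (pd j g) x (EuclideanSpace.single i 1) from rfl, h4]
  simp

lemma pd_comm_s6 {U : Set (EuclideanSpace ℝ (Fin N))} (hU : IsOpen U) (i j : Fin N)
    {g : EuclideanSpace ℝ (Fin N) → ℝ} (hg : ContDiffOn ℝ (⊤ : ℕ∞) g U) :
    EqOn (pd i (pd j g)) (pd j (pd i g)) U := by
  intro x hx
  rw [pd_pd_apply hU i j hg hx, pd_pd_apply hU j i hg hx]
  have := (hg.contDiffAt (hU.mem_nhds hx)).isSymmSndFDerivAt (by
    simp only [minSmoothness_of_isRCLikeNormedField]; exact WithTop.coe_le_coe.2 (le_top : (2 : ℕ∞) ≤ ⊤))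
  exact this _ _

lemma pd_iter_comm {U : Set (EuclideanSpace ℝ (Fin N))} (hU : IsOpen U) (c j : Fin N)
    {g : EuclideanSpace ℝ (Fin N) → ℝ} (hg : ContDiffOn ℝ (⊤ : ℕ∞) g U) (k : ℕ) :
    EqOn ((pd c)^[k] (pd j g)) (pd j ((pd c)^[k] g)) U := by
  induction k with
  | zero => exact fun x _ => rfl
  | succ k ih =>
    simp only [Function.iterate_succ_apply']
    exact (pd_eqOn hU c ih).trans (pd_comm_s6 hU c j (pd_iter_contDiffOn hU c hg k))

/-- Partial version of `mderiv` along a list. -/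
noncomputable def ml (l : List (Fin N)) (α : Fin N → ℕ) (f : EuclideanSpace ℝ (Fin N) → ℝ) :
    EuclideanSpace ℝ (Fin N) → ℝ := l.foldr (fun i g => (pd i)^[α i] g) f

lemma ml_contDiffOn {U : Set (EuclideanSpace ℝ (Fin N))} (hU : IsOpen U) (l : List (Fin N))
    (α : Fin N → ℕ) {g : EuclideanSpace ℝ (Fin N) → ℝ} (hg : ContDiffOn ℝ (⊤ : ℕ∞) g U) :
    ContDiffOn ℝ (⊤ : ℕ∞) (ml l α g) U := by
  induction l with
  | nil => exact hg
  | cons c l ih => exact pd_iter_contDiffOn hU c ih _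

lemma ml_notMem (l : List (Fin N)) (j : Fin N) (hj : j ∉ l) (α : Fin N → ℕ)
    (g : EuclideanSpace ℝ (Fin N) → ℝ) : ml l (α + Pi.single j 1 : Fin N → ℕ) g = ml l α g := by
  induction l with
  | nil => rfl
  | cons c l ih =>
    simp only [List.mem_cons, not_or] at hj
    have h1 : (α + Pi.single j 1 : Fin N → ℕ) c = α c := by simp [Ne.symm hj.1]
    change (pd c)^[(α + Pi.single j 1 : Fin N → ℕ) c] (ml l (α + Pi.single j 1 : Fin N → ℕ) g) = (pd c)^[α c] (ml l α g)
    rw [h1, ih hj.2]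

lemma ml_succ {U : Set (EuclideanSpace ℝ (Fin N))} (hU : IsOpen U) (l : List (Fin N))
    (hl : l.Nodup) (j : Fin N) (hj : j ∈ l)
    (α : Fin N → ℕ) {g : EuclideanSpace ℝ (Fin N) → ℝ} (hg : ContDiffOn ℝ (⊤ : ℕ∞) g U) :
    EqOn (ml l (α + Pi.single j 1 : Fin N → ℕ) g) (pd j (ml l α g)) U := by
  induction l with
  | nil => simp at hj
  | cons c l ih =>
    rw [List.nodup_cons] at hl
    change EqOn ((pd c)^[(α + Pi.single j 1 : Fin N → ℕ) c] (ml l (α + Pi.single j 1 : Fin N → ℕ) g))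
      (pd j ((pd c)^[α c] (ml l α g))) U
    by_cases hc : c = j
    · subst hc
      rw [ml_notMem l c hl.1]
      have h1 : (α + Pi.single c 1 : Fin N → ℕ) c = α c + 1 := by simp
      rw [h1, Function.iterate_succ_apply']
      exact fun x _ => rfl
    · have h1 : (α + Pi.single j 1 : Fin N → ℕ) c = α c := by simp [hc]
      have hj' : j ∈ l := by
        rcases List.mem_cons.1 hj with h | h
        · exact absurd h.symm hc
        · exact h
      rw [h1]
      exact (pd_iter_eqOn hU c (ih hl.2 hj') _).trans
        (pd_iter_comm hU c j (ml_contDiffOn hU l α hg) _)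

lemma mderiv_contDiffOn {U : Set (EuclideanSpace ℝ (Fin N))} (hU : IsOpen U)
    (α : Fin N → ℕ) {g : EuclideanSpace ℝ (Fin N) → ℝ} (hg : ContDiffOn ℝ (⊤ : ℕ∞) g U) :
    ContDiffOn ℝ (⊤ : ℕ∞) (mderiv α g) U := ml_contDiffOn hU _ α hg

lemma mderiv_succ {U : Set (EuclideanSpace ℝ (Fin N))} (hU : IsOpen U) (j : Fin N)
    (α : Fin N → ℕ) {g : EuclideanSpace ℝ (Fin N) → ℝ} (hg : ContDiffOn ℝ (⊤ : ℕ∞) g U) :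
    EqOn (mderiv (α + Pi.single j 1 : Fin N → ℕ) g) (pd j (mderiv α g)) U :=
  ml_succ hU _ (Finset.nodup_toList _) j (by simp) α hg

lemma mderiv_zero (g : EuclideanSpace ℝ (Fin N) → ℝ) : mderiv (0 : Fin N → ℕ) g = g := by
  have : ∀ l : List (Fin N), ml l 0 g = g := by
    intro l
    induction l with
    | nil => rfl
    | cons c l ih =>
      change (pd c)^[0] (ml l 0 g) = g
      rw [ih]; rfl
  exact this _

lemma multi_induction {P : (Fin N → ℕ) → Prop} (h0 : P 0)
    (hs : ∀ α j, P α → P (α + Pi.single j 1)) (α : Fin N → ℕ) : P α := by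
  generalize hn : ∑ j, α j = n
  induction n generalizing α with
  | zero =>
    have : α = 0 := by
      ext j
      simpa using (Finset.sum_eq_zero_iff.1 hn) j (Finset.mem_univ j)
    rw [this]; exact h0
  | succ n ih =>
    have : ∃ j, α j ≠ 0 := by
      by_contra hcon
      push Not at hcon
      simp [hcon] at hn
    obtain ⟨j, hj⟩ := this
    have hα : α = (α - Pi.single j 1) + Pi.single j 1 := by
      ext c
      by_cases hc : c = j
      · subst hc; simp; omega
      · simp [hc]
    rw [hα]
    apply hs
    apply ih
    rw [hα] at hn
    simp only [Pi.add_apply, Finset.sum_add_distrib, Finset.sum_pi_single', Finset.mem_univ,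
      if_true] at hn
    omega

lemma leibniz {U : Set (EuclideanSpace ℝ (Fin N))} (hU : IsOpen U) (i : Fin N) (a : ℝ)
    {f h : EuclideanSpace ℝ (Fin N) → ℝ} (hf : ContDiffOn ℝ (⊤ : ℕ∞) f U)
    (hh : ContDiffOn ℝ (⊤ : ℕ∞) h U) (hfh : ∀ x ∈ U, f x = (x i - a) * h x)
    (α : Fin N → ℕ) : ∀ x ∈ U, mderiv α f x =
      (x i - a) * mderiv α h x + α i * mderiv (α - Pi.single i 1) h x := by
  induction α using multi_induction with
  | h0 => intro x hx; simp [mderiv_zero, hfh x hx]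
  | hs β j ih =>
    intro x hx
    rw [mderiv_succ hU j β hf hx]
    have e1 : EqOn (mderiv β f) (fun x => (x i - a) * mderiv β h x +
      β i * mderiv (β - Pi.single i 1) h x) U := ih
    rw [pd_eqOn hU j e1 hx]
    have d1 : DifferentiableAt ℝ (mderiv β h) x := diffAt_of hU (mderiv_contDiffOn hU β hh) hx
    have d2 : DifferentiableAt ℝ (mderiv (β - Pi.single i 1) h) x :=
      diffAt_of hU (mderiv_contDiffOn hU _ hh) hx
    have d3 : HasFDerivAt (fun x : EuclideanSpace ℝ (Fin N) => x i - a)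
        (EuclideanSpace.proj i : EuclideanSpace ℝ (Fin N) →L[ℝ] ℝ) x :=
      ((EuclideanSpace.proj i : EuclideanSpace ℝ (Fin N) →L[ℝ] ℝ).hasFDerivAt).sub_const a
    have d4 := (d3.mul d1.hasFDerivAt).add (d2.hasFDerivAt.const_mul (β i : ℝ))
    have d5 : pd j (fun x => (x i - a) * mderiv β h x +
      β i * mderiv (β - Pi.single i 1) h x) x =
        (x i - a) * pd j (mderiv β h) x + mderiv β h x * (if i = j then 1 else 0)
        + β i * pd j (mderiv (β - Pi.single i 1) h) x := by
      have := d4.fderiv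
      unfold pd
      erw [this]
      simp [Pi.single_apply]
    rw [d5, ← mderiv_succ hU j β hh hx, ← mderiv_succ hU j _ hh hx]
    by_cases hij : i = j
    · subst hij
      have e2 : β + Pi.single i 1 - Pi.single i 1 = β := by simp
      rw [e2]
      by_cases hb : β i = 0
      · simp [hb]
      · have e3 : β - Pi.single i 1 + Pi.single i 1 = β := by
          ext c
          by_cases hc : c = i
          · subst hc; simp; omega
          · simp [hc]
        rw [e3]
        simp
        ring
    · have e2 : β + Pi.single j 1 - Pi.single i 1 = β - Pi.single i 1 + Pi.single j 1 := by
        ext c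
        by_cases hc : c = i
        · subst hc; simp [hij]
        · simp [hc]
      rw [e2]
      simp [hij]

/-- The quotient. -/
noncomputable def quo (i : Fin N) (a : ℝ) (f : EuclideanSpace ℝ (Fin N) → ℝ) :
    EuclideanSpace ℝ (Fin N) → ℝ :=
  fun x => if x i = a then pd i f x else f x / (x i - a)

lemma quo_contDiffOn {U : Set (EuclideanSpace ℝ (Fin N))} (hU : IsOpen U) (i : Fin N) (a : ℝ)
    {f : EuclideanSpace ℝ (Fin N) → ℝ} (hf : ContDiffOn ℝ (⊤ : ℕ∞) f U)
    (hvanish : ∀ x ∈ U, x i = a → f x = 0) :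
    ContDiffOn ℝ (⊤ : ℕ∞) (quo i a f) U := by
  intro x hx
  apply ContDiffAt.contDiffWithinAt
  have hcc : Continuous (fun x : EuclideanSpace ℝ (Fin N) => x i - a) :=
    (coord_contDiff i a).continuous
  by_cases hxa : x i = a
  · obtain ⟨ε, hε, hball⟩ := Metric.isOpen_iff.1 hU x hx
    let χ : ContDiffBump x := ⟨ε / 3, ε / 2, by positivity, by linarith⟩
    set g : EuclideanSpace ℝ (Fin N) → ℝ := fun y => χ y * f y with hg
    have hgs : ContDiff ℝ (⊤ : ℕ∞) g := by
      rw [contDiff_iff_contDiffAt]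
      intro y
      by_cases hy : y ∈ U
      · exact χ.contDiff.contDiffAt.mul (hf.contDiffAt (hU.mem_nhds hy))
      · have hy2 : y ∉ tsupport χ := by
          rw [χ.tsupport_eq]
          intro hy3
          apply hy
          apply hball
          have : dist y x ≤ ε / 2 := hy3
          exact lt_of_le_of_lt this (by linarith)
        have : g =ᶠ[𝓝 y] fun _ => 0 := by
          filter_upwards [notMem_tsupport_iff_eventuallyEq.1 hy2] with z hz
          simp [hg, hz]
        exact contDiffAt_const.congr_of_eventuallyEq this
    have hgf : ∀ y ∈ Metric.ball x (ε / 3), g y = f y := by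
      intro y hy
      have : χ y = 1 := χ.one_of_mem_closedBall (Metric.ball_subset_closedBall hy)
      simp [hg, this]
    have hpdg : ContDiff ℝ (⊤ : ℕ∞) (pd i g) := by
      rw [← contDiffOn_univ] at hgs ⊢
      exact pd_contDiffOn isOpen_univ i hgs
    have hpt : ContDiff ℝ (⊤ : ℕ∞)
        (fun p : EuclideanSpace ℝ (Fin N) × ℝ => pt i a p.2 p.1) := by
      unfold pt
      refine contDiff_fst.add (ContDiff.fun_smul ?_ contDiff_const)
      exact (contDiff_snd.sub contDiff_const).mul ((coord_contDiff i a).comp contDiff_fst)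
    have hI := contDiff_param (fun p : EuclideanSpace ℝ (Fin N) × ℝ => pd i g (pt i a p.2 p.1))
      (hpdg.comp hpt)
    refine hI.contDiffAt.congr_of_eventuallyEq ?_
    filter_upwards [Metric.ball_mem_nhds x (show 0 < ε / 3 by positivity)] with y hy
    have hyU : Metric.ball x (ε / 3) ⊆ U :=
      (Metric.ball_subset_ball (by linarith)).trans hball
    simp only [quo]
    split_ifs with hya
    · simp only [pt_eq i a _ y hya]
      rw [intervalIntegral.integral_const]
      rw [pd_eqOn Metric.isOpen_ball i (g := g) (g' := f) hgf hy]
      simp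
    · have hya' : y i - a ≠ 0 := sub_ne_zero.2 hya
      have hft : ∫ t in (0:ℝ)..1, (y i - a) * pd i g (pt i a t y) =
          g (pt i a 1 y) - g (pt i a 0 y) := by
        refine intervalIntegral.integral_eq_sub_of_hasDerivAt
          (f := fun t => g (pt i a t y)) ?_ ?_
        · intro t _
          exact comp_pt_hasDerivAt i a t y g ((hgs.differentiable (by simp)) _)
        · apply Continuous.intervalIntegrable
          have : Continuous fun t : ℝ => pt i a t y :=
            hpt.continuous.comp (Continuous.prodMk_right y)
          exact continuous_const.mul (hpdg.continuous.comp this)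
      have h0 : pt i a 0 y ∈ Metric.ball x (ε / 3) :=
        lt_of_le_of_lt (pt_dist i a 0 (by simp) x y hxa) hy
      rw [pt_one, hgf y hy, hgf _ h0, hvanish _ (hyU h0) (by
        have := pt_apply i a 0 y; linarith), intervalIntegral.integral_const_mul, sub_zero] at hft
      rw [← hft]
      field_simp
  · have h1 : ContDiffAt ℝ (⊤ : ℕ∞) (fun y => f y / (y i - a)) x :=
      (hf.contDiffAt (hU.mem_nhds hx)).div (coord_contDiff i a).contDiffAt (sub_ne_zero.2 hxa)
    refine h1.congr_of_eventuallyEq ?_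
    filter_upwards [hcc.continuousAt.eventually_ne (sub_ne_zero.2 hxa)] with y hy
    simp [quo, sub_ne_zero.1 hy]

/-- Local bound property. -/
def Bd (M : ℕ → ℝ) (h : EuclideanSpace ℝ (Fin N) → ℝ) (s : Set (EuclideanSpace ℝ (Fin N))) :
    Prop :=
  ∃ A B : ℝ, 0 < A ∧ 0 < B ∧ ∀ x ∈ s, ∀ α : Fin N → ℕ,
      (1 / (∏ i, ((α i).factorial : ℝ))) * |mderiv α h x| ≤
        A * B ^ (∑ i, α i) * M (∑ i, α i)

lemma Bd_union {M : ℕ → ℝ} (hpos : ∀ j, 0 < M j) {h : EuclideanSpace ℝ (Fin N) → ℝ}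
    {s t : Set (EuclideanSpace ℝ (Fin N))} (hs : Bd M h s) (ht : Bd M h t) : Bd M h (s ∪ t) := by
  obtain ⟨A, B, hA, hB, H⟩ := hs
  obtain ⟨A', B', hA', hB', H'⟩ := ht
  refine ⟨A + A', B + B', by positivity, by positivity, ?_⟩
  rintro x (hx | hx) α
  · refine (H x hx α).trans ?_
    have := (hpos (∑ i, α i)).le
    gcongr <;> linarith
  · refine (H' x hx α).trans ?_
    have := (hpos (∑ i, α i)).le
    gcongr <;> linarith

lemma sum_succ (α : Fin N → ℕ) (i : Fin N) :
    ∑ j, (α + Pi.single i 1 : Fin N → ℕ) j = ∑ j, α j + 1 := by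
  simp [Finset.sum_add_distrib]

lemma fact_succ (α : Fin N → ℕ) (i : Fin N) :
    ∏ j, (((α + Pi.single i 1 : Fin N → ℕ) j).factorial : ℝ) =
      (α i + 1) * ∏ j, ((α j).factorial : ℝ) := by
  rw [← Finset.mul_prod_erase _ _ (Finset.mem_univ i),
    ← Finset.mul_prod_erase (a := i) (f := fun j => ((α j).factorial : ℝ)) _ (Finset.mem_univ i)]
  have : ∏ j ∈ Finset.univ.erase i, (((α + Pi.single i 1 : Fin N → ℕ) j).factorial : ℝ) =
      ∏ j ∈ Finset.univ.erase i, ((α j).factorial : ℝ) := by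
    apply Finset.prod_congr rfl
    intro j hj
    simp [Finset.ne_of_mem_erase hj]
  rw [this]
  simp [Nat.factorial_succ]
  ring

lemma fact_pos (α : Fin N → ℕ) : 0 < ∏ j, ((α j).factorial : ℝ) :=
  Finset.prod_pos fun j _ => by exact_mod_cast Nat.factorial_pos _

lemma M_succ {M : ℕ → ℝ} (hpos : ∀ j, 0 < M j) (hM0 : M 0 = 1)  (hmono : Monotone M)
    (hder : ∃ C : ℝ, ∀ j : ℕ, 1 ≤ j → (M (j+1) / M j) ^ ((1 : ℝ) / j) ≤ C) :
    ∃ C : ℝ, 0 < C ∧ ∀ j, M (j+1) ≤ M 1 * C ^ j * M j := by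
  obtain ⟨C, hC⟩ := hder
  refine ⟨max C 1, by positivity, fun j => ?_⟩
  rcases Nat.eq_zero_or_pos j with rfl | hj
  · simp [hM0]
  · have h1 : (1:ℝ) ≤ M 1 := by rw [← hM0]; exact hmono (by norm_num)
    have hq : 0 ≤ M (j+1) / M j := (div_pos (hpos _) (hpos _)).le
    have h2 : ((M (j+1) / M j) ^ ((1 : ℝ) / j)) ^ j ≤ (max C 1) ^ j :=
      pow_le_pow_left₀ (Real.rpow_nonneg hq _) ((hC j hj).trans (le_max_left _ _)) _
    rw [one_div, Real.rpow_inv_natCast_pow hq (by omega), div_le_iff₀ (hpos j)] at h2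
    refine h2.trans ?_
    have : 0 ≤ max C 1 ^ j * M j := mul_nonneg (by positivity) (hpos j).le
    nlinarith

lemma bd_on {M : ℕ → ℝ} (hpos : ∀ j, 0 < M j) (hM0 : M 0 = 1)  (hmono : Monotone M)
    (hder : ∃ C : ℝ, ∀ j : ℕ, 1 ≤ j → (M (j+1) / M j) ^ ((1 : ℝ) / j) ≤ C)
    {U : Set (EuclideanSpace ℝ (Fin N))} (hU : IsOpen U) (i : Fin N) (a : ℝ)
    {f h : EuclideanSpace ℝ (Fin N) → ℝ} (hf : ContDiffOn ℝ (⊤ : ℕ∞) f U)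
    (hh : ContDiffOn ℝ (⊤ : ℕ∞) h U) (hfh : ∀ x ∈ U, f x = (x i - a) * h x)
    (K : Set (EuclideanSpace ℝ (Fin N))) (hKU : K ⊆ U)
    (hK : ∀ x ∈ K, ∀ t ∈ Icc (0:ℝ) 1, pt i a t x ∈ K) (hb : Bd M f K) : Bd M h K := by
  obtain ⟨C, hC, hMC⟩ := M_succ hpos hM0 hmono hder
  obtain ⟨A, B, hA, hB, H⟩ := hb
  have hM1 := hpos 1
  refine ⟨A * B * M 1, B * C, by positivity, by positivity, fun x hx α => ?_⟩
  set n := ∑ j, α j with hn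
  set P := ∏ j, ((α j).factorial : ℝ) with hP
  have hPpos : 0 < P := fact_pos α
  set S := P * (A * B ^ (n + 1) * M (n + 1)) with hS
  have hbound : ∀ y ∈ K, |mderiv (α + Pi.single i 1 : Fin N → ℕ) f y| ≤ (α i + 1) * S := by
    intro y hy
    have := H y hy (α + Pi.single i 1)
    rw [sum_succ, fact_succ, one_div, inv_mul_le_iff₀ (by positivity)] at this
    refine this.trans_eq ?_
    rw [hS]; ring
  have hmain : |mderiv α h x| ≤ S := by
    have hu' : ∀ t ∈ Icc (0:ℝ) 1, HasDerivAt (fun t => t ^ (α i + 1) * mderiv α h (pt i a t x))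
        (t ^ (α i) * mderiv (α + Pi.single i 1 : Fin N → ℕ) f (pt i a t x)) t := by
      intro t ht
      have hU' := hKU (hK x hx t ht)
      have h1 := (hasDerivAt_pow (α i + 1) t).mul (comp_pt_hasDerivAt i a t x (mderiv α h)
        (diffAt_of hU (mderiv_contDiffOn hU α hh) hU'))
      have h2 := leibniz hU i a hf hh hfh (α + Pi.single i 1 : Fin N → ℕ) _ hU'
      have h3 : α + Pi.single i 1 - Pi.single i 1 = α := by simp
      rw [h3, mderiv_succ hU i α hh hU', pt_apply] at h2
      refine h1.congr_deriv ?_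
      rw [h2]
      simp
      ring
    have := image_norm_le_of_norm_deriv_right_le_deriv_boundary
      (f := fun t => t ^ (α i + 1) * mderiv α h (pt i a t x))
      (f' := fun t => t ^ (α i) * mderiv (α + Pi.single i 1 : Fin N → ℕ) f (pt i a t x))
      (a := 0) (b := 1) (B := fun t => S * t ^ (α i + 1))
      (B' := fun t => S * (((α i + 1 : ℕ) : ℝ) * t ^ (α i)))
      (fun t ht => (hu' t ht).continuousAt.continuousWithinAt)
      (fun t ht => (hu' t (Ico_subset_Icc_self ht)).hasDerivWithinAt) (by simp)
      (fun t => by simpa using (hasDerivAt_pow (α i + 1) t).const_mul S)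
      (fun t ht => by
        rw [norm_mul, Real.norm_eq_abs, Real.norm_eq_abs, abs_of_nonneg (pow_nonneg ht.1 _)]
        have := mul_le_mul_of_nonneg_left (hbound _ (hK x hx t (Ico_subset_Icc_self ht)))
          (pow_nonneg ht.1 (α i))
        refine this.trans_eq ?_
        push_cast
        ring) (right_mem_Icc.2 zero_le_one)
    simpa [pt_one] using this
  rw [one_div, inv_mul_le_iff₀ hPpos]
  refine hmain.trans ?_
  rw [hS]
  apply mul_le_mul_of_nonneg_left _ hPpos.le
  have := mul_le_mul_of_nonneg_left (hMC n) (show 0 ≤ A * B ^ (n+1) by positivity)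
  refine this.trans_eq ?_
  rw [mul_pow]; ring

lemma bd_off {M : ℕ → ℝ} (hpos : ∀ j, 0 < M j) (hmono : Monotone M)
    {U : Set (EuclideanSpace ℝ (Fin N))} (hU : IsOpen U) (i : Fin N) (a : ℝ)
    {f h : EuclideanSpace ℝ (Fin N) → ℝ} (hf : ContDiffOn ℝ (⊤ : ℕ∞) f U)
    (hh : ContDiffOn ℝ (⊤ : ℕ∞) h U) (hfh : ∀ x ∈ U, f x = (x i - a) * h x)
    (K : Set (EuclideanSpace ℝ (Fin N))) (hKU : K ⊆ U) (δ : ℝ) (hδ : 0 < δ)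
    (hK : ∀ x ∈ K, δ ≤ |x i - a|) (hb : Bd M f K) : Bd M h K := by
  obtain ⟨A, B, hA, hB, H⟩ := hb
  refine ⟨2 * A / δ, B + 2 / δ, by positivity, by positivity, fun x hx α => ?_⟩
  generalize hk : α i = k
  induction k generalizing α with
  | zero =>
    have h1 := leibniz hU i a hf hh hfh α x (hKU hx)
    rw [hk] at h1
    have h2 := H x hx α
    have hPpos := fact_pos α
    have hMp := hpos (∑ j, α j)
    rw [h1] at h2
    simp only [Nat.cast_zero, zero_mul, add_zero, abs_mul] at h2
    rw [one_div, inv_mul_le_iff₀ hPpos] at h2 ⊢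
    have h3 : δ * |mderiv α h x| ≤ |x i - a| * |mderiv α h x| :=
      mul_le_mul_of_nonneg_right (hK x hx) (abs_nonneg _)
    have h4 : |mderiv α h x| ≤
        (∏ j, ((α j).factorial : ℝ)) * (A * B ^ (∑ j, α j) * M (∑ j, α j)) / δ := by
      rw [le_div_iff₀ hδ]; linarith
    refine h4.trans ?_
    rw [mul_div_assoc]
    apply mul_le_mul_of_nonneg_left _ hPpos.le
    have h5 : B ^ (∑ j, α j) ≤ (B + 2 / δ) ^ (∑ j, α j) :=
      pow_le_pow_left₀ hB.le (by have : 0 < 2 / δ := by positivity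
                                 linarith) _
    calc A * B ^ (∑ j, α j) * M (∑ j, α j) / δ = A / δ * B ^ (∑ j, α j) * M (∑ j, α j) := by ring
      _ ≤ 2 * A / δ * (B + 2 / δ) ^ (∑ j, α j) * M (∑ j, α j) := by
        gcongr
        linarith
  | succ k ih =>
    have hα : ∃ β : Fin N → ℕ, α = β + Pi.single i 1 := by
      refine ⟨α - Pi.single i 1, ?_⟩
      ext c
      by_cases hc : c = i
      · subst hc; simp; omega
      · simp [hc]
    obtain ⟨β, rfl⟩ := hα
    have hbk : β i = k := by simpa using hk
    have ih := ih β hbk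
    have h1 := leibniz hU i a hf hh hfh (β + Pi.single i 1 : Fin N → ℕ) x (hKU hx)
    have e : β + Pi.single i 1 - Pi.single i 1 = β := by simp
    rw [e] at h1
    have h2 := H x hx (β + Pi.single i 1)
    have hPpos := fact_pos β
    rw [sum_succ, fact_succ, one_div, inv_mul_le_iff₀ (by positivity)] at h2 ⊢
    rw [one_div, inv_mul_le_iff₀ hPpos] at ih
    set n := ∑ j, β j
    set P := ∏ j, ((β j).factorial : ℝ)
    have hMp := hpos n
    have hMp1 := hpos (n+1)
    have hMM : M n ≤ M (n+1) := hmono (Nat.le_succ n)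
    have hc : (((β + Pi.single i 1 : Fin N → ℕ) i : ℕ) : ℝ) = β i + 1 := by simp
    rw [hc] at h1
    set X := mderiv (β + Pi.single i 1 : Fin N → ℕ) h x
    set Y := mderiv β h x
    set c : ℝ := (β i : ℝ) + 1
    have hcpos : 0 < c := by positivity
    have h3 : δ * |X| ≤ |x i - a| * |X| := mul_le_mul_of_nonneg_right (hK x hx) (abs_nonneg _)
    have h4 : |x i - a| * |X| ≤ |mderiv (β + Pi.single i 1 : Fin N → ℕ) f x| + c * |Y| := by
      rw [← abs_mul, show (x i - a) * X = mderiv (β + Pi.single i 1 : Fin N → ℕ) f x - c * Y by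
        rw [h1]; ring]
      refine (abs_sub _ _).trans_eq ?_
      rw [abs_mul, abs_of_pos hcpos]
    have h6 : c * |Y| ≤ c * (P * (2 * A / δ * (B + 2 / δ) ^ n * M (n+1))) := by
      refine mul_le_mul_of_nonneg_left (ih.trans ?_) hcpos.le
      gcongr
    have h5 : B ^ (n+1) ≤ (B + 2 / δ) ^ (n+1) :=
      pow_le_pow_left₀ hB.le (by have : 0 < 2 / δ := by positivity
                                 linarith) _
    have h7 : (2 / δ) * (B + 2 / δ) ^ n ≤ (B + 2 / δ) ^ (n+1) := by
      rw [pow_succ']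
      gcongr
      linarith
    have h8 : δ * |X| ≤ δ * (c * P * (2 * A / δ * (B + 2 / δ) ^ (n+1) * M (n+1))) := by
      calc δ * |X| ≤ c * P * (A * B ^ (n+1) * M (n+1)) +
            c * (P * (2 * A / δ * (B + 2 / δ) ^ n * M (n+1))) := by linarith
        _ = c * P * A * M (n+1) * (B ^ (n+1) + (2 / δ) * (B + 2 / δ) ^ n) := by ring
        _ ≤ c * P * A * M (n+1) * ((B + 2 / δ) ^ (n+1) + (B + 2 / δ) ^ (n+1)) := by
          gcongr
        _ = δ * (c * P * (2 * A / δ * (B + 2 / δ) ^ (n+1) * M (n+1))) := by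
          field_simp
          ring
    exact le_of_mul_le_mul_left h8 hδ

end Helpers

/-- `C^ℝ_M(U)` is closed under division by a coordinate. -/
theorem stmt6 {N : ℕ} (M : ℕ → ℝ)
    (hpos : ∀ j, 0 < M j) (hmono : Monotone M) (hM0 : M 0 = 1)
    (hlog : ∀ j : ℕ, M (j+1) / M j ≤ M (j+2) / M (j+1))
    (hgrow : Filter.Tendsto (fun j : ℕ => M j ^ ((1 : ℝ) / j)) Filter.atTop Filter.atTop)
    (hder : ∃ C : ℝ, ∀ j : ℕ, 1 ≤ j → (M (j+1) / M j) ^ ((1 : ℝ) / j) ≤ C)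
    (U : Set (EuclideanSpace ℝ (Fin N))) (hUopen : IsOpen U)
    (f : EuclideanSpace ℝ (Fin N) → ℝ) (hf : CRM M U f)
    (i : Fin N) (a : ℝ)
    (hvanish : ∀ x ∈ U, x i = a → f x = 0) :
    ∃ h : EuclideanSpace ℝ (Fin N) → ℝ, CRM M U h ∧ ∀ x ∈ U, f x = (x i - a) * h x := by
  obtain ⟨hfs, hfb⟩ := hf
  have hh := quo_contDiffOn hUopen i a hfs hvanish
  have hfh : ∀ x ∈ U, f x = (x i - a) * quo i a f x := by
    intro x hx
    unfold quo
    split_ifs with h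
    · rw [hvanish x hx h, h]; simp
    · field_simp [sub_ne_zero.2 h]
  refine ⟨quo i a f, ⟨hh, fun K hKU hK => ?_⟩, hfh⟩
  change Bd M (quo i a f) K
  refine hK.induction_on (p := Bd M (quo i a f)) ?_ ?_ ?_ ?_
  · exact ⟨1, 1, one_pos, one_pos, fun x hx => by simp at hx⟩
  · rintro s t hst ⟨A, B, hA, hB, H⟩
    exact ⟨A, B, hA, hB, fun x hx => H x (hst hx)⟩
  · exact fun s t hs ht => Bd_union hpos hs ht
  · intro x hx
    obtain ⟨ε, hε, hball⟩ := Metric.nhds_basis_closedBall.mem_iff.1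
      (hUopen.mem_nhds (hKU hx))
    by_cases hxa : x i = a
    · refine ⟨Metric.closedBall x ε, mem_nhdsWithin_of_mem_nhds
        (Metric.closedBall_mem_nhds x hε), ?_⟩
      refine bd_on hpos hM0 hmono hder hUopen i a hfs hh hfh _ hball ?_
        (hfb _ hball (isCompact_closedBall x ε))
      intro y hy t ht
      exact (pt_dist i a t ht x y hxa).trans hy
    · have hd : 0 < |x i - a| := abs_pos.2 (sub_ne_zero.2 hxa)
      set K' := Metric.closedBall x ε ∩ {y | |x i - a| / 2 ≤ |y i - a|} with hK'
      have hc : Continuous (fun y : EuclideanSpace ℝ (Fin N) => |y i - a|) :=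
        (coord_contDiff i a).continuous.abs
      refine ⟨K', mem_nhdsWithin_of_mem_nhds (Filter.inter_mem
        (Metric.closedBall_mem_nhds x hε) ?_), ?_⟩
      · exact hc.continuousAt.eventually (le_mem_nhds (by linarith))
      · refine bd_off hpos hmono hUopen i a hfs hh hfh K' (inter_subset_left.trans hball)
          (|x i - a| / 2) (by positivity) (fun y hy => hy.2) (hfb _ (inter_subset_left.trans hball) ?_)
        exact (isCompact_closedBall x ε).inter_right (isClosed_le continuous_const hc)
end
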